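/- Let F be a family of graphs on vertex set [n] (n ≥ 3) such that for all G, H in F the intersection G ∩ H is Hamiltonian. Then |F| ≤ 2^(C(n,2) - n), i.e., F contains at most a 1/2^n fraction of all graphs on [n]. -/

import Mathlib

/-!
A Hamiltonian graph stays connected after deleting any one vertex, so it suffices to bound families
`F` such that for all `G, H ∈ F` and every vertex `v` the pairs on which `G` and `H` agree form a
graph `(G ∆ H)ᶜ` that is connected on `V \ {v}`.

* For a fixed `v`, let `F_v` be the family of restrictions of `F` to `V \ {v}`. If `G, H ∈ F_v` and
  `G ∆ H` is a cut, then that cut is empty, since it avoids the connected graph `(G ∆ H)ᶜ`. So the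
  translates of `F_v` by the `2 ^ (n - 2)` cuts of `V \ {v}` are pairwise disjoint, and
  `|F_v| ≤ 2 ^ (C(n-1,2) - (n-2))`.
* Each pair of vertices survives exactly `n - 2` of the `n` vertex deletions, so Shearer's lemma
  gives `|F| ^ (n - 2) ≤ ∏ v, |F_v|`, and `n * C(n-1,2) = (n-2) * C(n,2)`.

Shearer's lemma is proved with fractional weights, by splitting a set family according to membership
of one element and applying Hölder's inequality on a two-point space.
-/

open Finset MeasureTheory
open scoped NNReal symmDiff

section Holder

variable {ι : Type*} (s : Finset ι) {w : ι → ℝ≥0} (a b : ι → ℝ≥0)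

lemma prod_rpow_add_prod_rpow_le_of_sum_eq_one (hw : ∑ i ∈ s, w i = 1) :
    ∏ i ∈ s, a i ^ (w i : ℝ) + ∏ i ∈ s, b i ^ (w i : ℝ) ≤ ∏ i ∈ s, (a i + b i) ^ (w i : ℝ) := by
  -- `Bool` with the counting measure turns the two integrals into the two-term sums.
  have hölder := ENNReal.lintegral_prod_norm_pow_le (μ := Measure.count) s
    (f := fun i (t : Bool) ↦ (if t then a i else b i : ENNReal)) (p := fun i ↦ (w i : ℝ))
    (fun i _ ↦ (measurable_of_finite _).aemeasurable) (by exact_mod_cast hw)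
    (fun i _ ↦ (w i).coe_nonneg)
  simp only [lintegral_fintype, Fintype.sum_bool, Measure.count_singleton, mul_one,
    reduceIte, Bool.false_eq_true] at hölder
  simp only [← ENNReal.coe_rpow_of_nonneg _ (NNReal.coe_nonneg _), ← ENNReal.coe_add] at hölder
  exact_mod_cast hölder

lemma prod_rpow_add_prod_rpow_le (hw : 1 ≤ ∑ i ∈ s, w i) :
    ∏ i ∈ s, a i ^ (w i : ℝ) + ∏ i ∈ s, b i ^ (w i : ℝ) ≤ ∏ i ∈ s, (a i + b i) ^ (w i : ℝ) := by
  set W := ∑ i ∈ s, w i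
  have hW : W ≠ 0 := (one_pos.trans_le hw).ne'
  have prod_rpow_normalized (c : ι → ℝ≥0) :
      ∏ i ∈ s, c i ^ (w i : ℝ) = (∏ i ∈ s, c i ^ ((w i / W : ℝ≥0) : ℝ)) ^ (W : ℝ) := by
    rw [← NNReal.finsetProd_rpow]
    refine prod_congr rfl fun i _ ↦ ?_
    rw [← NNReal.rpow_mul, ← NNReal.coe_mul, div_mul_cancel₀ _ hW]
  have hsum : ∑ i ∈ s, w i / W = 1 := by rw [← sum_div, div_self hW]
  simp only [prod_rpow_normalized]
  grw [NNReal.add_rpow_le_rpow_add _ _ (by exact_mod_cast hw),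
    prod_rpow_add_prod_rpow_le_of_sum_eq_one s a b hsum]

end Holder

section Shearer

variable {α ι : Type*} [DecidableEq α]

/-- The trace of a set family `𝒜` on `T`, i.e. the family of all `A ∩ T` with `A ∈ 𝒜`, whose size
is what Shearer's lemma compares with that of `𝒜`. -/
def familyTrace (𝒜 : Finset (Finset α)) (T : Finset α) : Finset (Finset α) :=
  𝒜.image (· ∩ T)

variable {𝒜 : Finset (Finset α)} {T : Finset α} {a : α}

lemma mem_familyTrace {X : Finset α} : X ∈ familyTrace 𝒜 T ↔ ∃ A ∈ 𝒜, A ∩ T = X := mem_image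

lemma familyTrace_nonMemberSubfamily_subset :
    familyTrace (𝒜.nonMemberSubfamily a) T ⊆ familyTrace 𝒜 T :=
  image_subset_image (filter_subset _ _)

lemma familyTrace_memberSubfamily_subset (ha : a ∉ T) :
    familyTrace (𝒜.memberSubfamily a) T ⊆ familyTrace 𝒜 T := by
  intro X hX
  obtain ⟨A, hA, rfl⟩ := mem_familyTrace.1 hX
  exact mem_familyTrace.2 ⟨insert a A, (mem_memberSubfamily.1 hA).1, insert_inter_of_notMem ha⟩

lemma nonMemberSubfamily_familyTrace (ha : a ∈ T) :
    (familyTrace 𝒜 T).nonMemberSubfamily a = familyTrace (𝒜.nonMemberSubfamily a) T := by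
  ext X
  simp only [mem_nonMemberSubfamily, mem_familyTrace]
  constructor
  · rintro ⟨⟨A, hA, rfl⟩, haX⟩
    exact ⟨A, ⟨hA, fun haA ↦ haX (mem_inter.2 ⟨haA, ha⟩)⟩, rfl⟩
  · rintro ⟨A, ⟨hA, haA⟩, rfl⟩
    exact ⟨⟨A, hA, rfl⟩, fun haX ↦ haA (mem_inter.1 haX).1⟩

lemma memberSubfamily_familyTrace (ha : a ∈ T) :
    (familyTrace 𝒜 T).memberSubfamily a = familyTrace (𝒜.memberSubfamily a) T := by
  ext X
  simp only [mem_memberSubfamily, mem_familyTrace]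
  constructor
  · rintro ⟨⟨A, hA, hAX⟩, haX⟩
    have haA : a ∈ A := (mem_inter.1 (hAX ▸ mem_insert_self a X)).1
    refine ⟨A.erase a, ⟨by rwa [insert_erase haA], notMem_erase a A⟩, ?_⟩
    rw [erase_inter, hAX, erase_insert haX]
  · rintro ⟨A, ⟨hA, haA⟩, rfl⟩
    exact ⟨⟨insert a A, hA, insert_inter_of_mem ha⟩, fun haX ↦ haA (mem_inter.1 haX).1⟩

lemma card_familyTrace_nonMemberSubfamily_add_card_familyTrace_memberSubfamily (ha : a ∈ T) :
    #(familyTrace (𝒜.nonMemberSubfamily a) T) + #(familyTrace (𝒜.memberSubfamily a) T) =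
      #(familyTrace 𝒜 T) := by
  rw [← nonMemberSubfamily_familyTrace ha, ← memberSubfamily_familyTrace ha, add_comm,
    card_memberSubfamily_add_card_nonMemberSubfamily]

variable [Fintype ι] {T : ι → Finset α} {w : ι → ℝ≥0}

lemma prod_card_familyTrace_rpow_add_le (hw : 1 ≤ ∑ i with a ∈ T i, w i) :
    ∏ i, (#(familyTrace (𝒜.nonMemberSubfamily a) (T i)) : ℝ≥0) ^ (w i : ℝ) +
      ∏ i, (#(familyTrace (𝒜.memberSubfamily a) (T i)) : ℝ≥0) ^ (w i : ℝ) ≤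
    ∏ i, (#(familyTrace 𝒜 (T i)) : ℝ≥0) ^ (w i : ℝ) := by
  set f₀ := fun i ↦ (#(familyTrace (𝒜.nonMemberSubfamily a) (T i)) : ℝ≥0)
  set f₁ := fun i ↦ (#(familyTrace (𝒜.memberSubfamily a) (T i)) : ℝ≥0)
  set f := fun i ↦ (#(familyTrace 𝒜 (T i)) : ℝ≥0)
  have f₀_le (i : ι) : f₀ i ≤ f i :=
    Nat.cast_le.2 <| card_le_card familyTrace_nonMemberSubfamily_subset
  have f₁_le (i : ι) (hi : a ∉ T i) : f₁ i ≤ f i :=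
    Nat.cast_le.2 <| card_le_card (familyTrace_memberSubfamily_subset hi)
  have f₀_add_f₁ (i : ι) (hi : a ∈ T i) : f₀ i + f₁ i = f i := by
    simp only [f₀, f₁, f, ← Nat.cast_add,
      card_familyTrace_nonMemberSubfamily_add_card_familyTrace_memberSubfamily hi]
  have split (g : ι → ℝ≥0) : ∏ i, g i ^ (w i : ℝ) =
      (∏ i with a ∈ T i, g i ^ (w i : ℝ)) * ∏ i with a ∉ T i, g i ^ (w i : ℝ) :=
    (prod_filter_mul_prod_filter_not univ _ _).symm
  calc ∏ i, f₀ i ^ (w i : ℝ) + ∏ i, f₁ i ^ (w i : ℝ)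
    _ ≤ (∏ i with a ∈ T i, f₀ i ^ (w i : ℝ) + ∏ i with a ∈ T i, f₁ i ^ (w i : ℝ)) *
          ∏ i with a ∉ T i, f i ^ (w i : ℝ) := by
      rw [split f₀, split f₁, add_mul]
      gcongr with i _ i hi
      · exact f₀_le i
      · exact f₁_le i (mem_filter.1 hi).2
    _ ≤ (∏ i with a ∈ T i, (f₀ i + f₁ i) ^ (w i : ℝ)) * ∏ i with a ∉ T i, f i ^ (w i : ℝ) := by
      grw [prod_rpow_add_prod_rpow_le _ f₀ f₁ hw]
    _ = ∏ i, f i ^ (w i : ℝ) := by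
      rw [split f]
      congr 1
      exact prod_congr rfl fun i hi ↦ by rw [f₀_add_f₁ i (mem_filter.1 hi).2]

theorem card_le_prod_card_familyTrace_rpow (𝒜 : Finset (Finset α))
    (hw : ∀ A ∈ 𝒜, ∀ a ∈ A, 1 ≤ ∑ i with a ∈ T i, w i) :
    (#𝒜 : ℝ≥0) ≤ ∏ i, (#(familyTrace 𝒜 (T i)) : ℝ≥0) ^ (w i : ℝ) := by
  induction 𝒜 using memberFamily_induction_on with
  | empty => simp
  | singleton_empty => simp [familyTrace]
  | @subfamily a 𝒜 ih₀ ih₁ =>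
    by_cases ha : ∃ A ∈ 𝒜, a ∈ A
    · obtain ⟨A, hA, haA⟩ := ha
      have card_eq : (#𝒜 : ℝ≥0) = #(𝒜.nonMemberSubfamily a) + #(𝒜.memberSubfamily a) := by
        rw [← card_memberSubfamily_add_card_nonMemberSubfamily a 𝒜, Nat.cast_add, add_comm]
      rw [card_eq]
      refine (add_le_add (ih₀ ?_) (ih₁ ?_)).trans
        (prod_card_familyTrace_rpow_add_le (hw A hA a haA))
      · exact fun B hB ↦ hw B (mem_nonMemberSubfamily.1 hB).1
      · exact fun B hB b hb ↦
          hw (insert a B) (mem_memberSubfamily.1 hB).1 b (mem_insert_of_mem hb)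
    · push Not at ha
      have nonMember_eq : 𝒜.nonMemberSubfamily a = 𝒜 := filter_true_of_mem ha
      rw [nonMember_eq] at ih₀
      exact ih₀ hw

theorem card_pow_le_prod_card_familyTrace (𝒜 : Finset (Finset α)) {k : ℕ} (hk : k ≠ 0)
    (hT : ∀ A ∈ 𝒜, ∀ a ∈ A, k ≤ #{i | a ∈ T i}) :
    #𝒜 ^ k ≤ ∏ i, #(familyTrace 𝒜 (T i)) := by
  have fractional := card_le_prod_card_familyTrace_rpow 𝒜 (T := T) (w := fun _ ↦ (k : ℝ≥0)⁻¹)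
    fun A hA a ha ↦ by
      rw [sum_const, nsmul_eq_mul, ← div_eq_mul_inv, one_le_div₀ (by positivity)]
      exact_mod_cast hT A hA a ha
  have pow_le := pow_le_pow_left₀ zero_le fractional k
  simp only [← prod_pow, NNReal.coe_inv, NNReal.coe_natCast, NNReal.rpow_inv_natCast_pow _ hk]
    at pow_le
  exact_mod_cast pow_le

end Shearer

section Cut

variable {V : Type*}

/-- The cut of `S`, as a graph: the complete bipartite graph between `S` and `Sᶜ`. The sets `S` and
`Sᶜ` have the same cut. -/
def cutGraph (S : Set V) : SimpleGraph V where
  Adj a b := ¬(a ∈ S ↔ b ∈ S)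
  symm := ⟨fun _ _ hab hba ↦ hab hba.symm⟩
  loopless := ⟨fun _ ha ↦ ha Iff.rfl⟩

lemma cutGraph_symmDiff (S R : Set V) : cutGraph (S ∆ R) = cutGraph S ∆ cutGraph R := by
  ext a b
  simp only [cutGraph, symmDiff_def, Set.sup_eq_union, Set.mem_union, Set.mem_sdiff,
    SimpleGraph.sup_adj, SimpleGraph.sdiff_adj]
  tauto

lemma eq_empty_or_eq_univ_of_disjoint_cutGraph {G : SimpleGraph V} {S : Set V}
    (hG : G.Preconnected) (hS : Disjoint G (cutGraph S)) : S = ∅ ∨ S = Set.univ := by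
  rw [← Set.not_nonempty_iff_eq_empty, or_iff_not_imp_left, not_not]
  rintro ⟨s, hs⟩
  refine Set.eq_univ_of_forall fun t ↦ by_contra fun ht ↦ ?_
  obtain ⟨p⟩ := hG s t
  obtain ⟨d, -, hfst, hsnd⟩ := p.exists_boundary_dart S hs ht
  exact (SimpleGraph.disjoint_left.1 hS) _ _ d.adj fun h ↦ hsnd (h.1 hfst)

lemma injOn_symmDiff_cutGraph {F : Set (SimpleGraph V)}
    (hF : ∀ G ∈ F, ∀ H ∈ F, ((G ∆ H)ᶜ).Preconnected) (u : V) :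
    Set.InjOn (fun p : SimpleGraph V × Set V ↦ p.1 ∆ cutGraph p.2) (F ×ˢ 𝒫 {u}ᶜ) := by
  rintro ⟨G, S⟩ ⟨hG, hS⟩ ⟨H, R⟩ ⟨hH, hR⟩ (heq : G ∆ cutGraph S = H ∆ cutGraph R)
  have cut_eq : cutGraph (S ∆ R) = G ∆ H := by
    rw [cutGraph_symmDiff, ← symmDiff_eq_bot, symmDiff_symmDiff_symmDiff_comm,
      symmDiff_comm _ G, symmDiff_comm _ H, heq, symmDiff_self]
  have hu : u ∉ S ∆ R := by
    rintro (⟨huS, -⟩ | ⟨huR, -⟩)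
    exacts [hS huS rfl, hR huR rfl]
  have hSR : S ∆ R = ∅ :=
    (eq_empty_or_eq_univ_of_disjoint_cutGraph (hF G hG H hH)
      (cut_eq ▸ disjoint_compl_left)).resolve_right fun h ↦ hu (h ▸ Set.mem_univ u)
  obtain rfl : S = R := symmDiff_eq_bot.1 hSR
  rw [symmDiff_left_injective _ heq]

variable [Finite V]

lemma natCard_simpleGraph : Nat.card (SimpleGraph V) = 2 ^ (Nat.card V).choose 2 := by
  have range_edgeSet : Set.range (SimpleGraph.edgeSet (V := V)) = 𝒫 Sym2.diagSetᶜ := by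
    ext s
    refine ⟨?_, fun hs ↦ ⟨.fromEdgeSet s, ?_⟩⟩
    · rintro ⟨G, rfl⟩
      exact G.edgeSet_subset_compl_diagSet
    · rw [SimpleGraph.edgeSet_fromEdgeSet]
      exact sdiff_eq_left.2 (Set.subset_compl_iff_disjoint_right.1 hs)
  rw [← Nat.card_range_of_injective SimpleGraph.edgeSet_injective, range_edgeSet,
    Nat.card_coe_set_eq, Set.ncard_powerset _, Sym2.ncard_diagSet_compl]

theorem ncard_mul_two_pow_le_of_connected_compl_symmDiff {F : Set (SimpleGraph V)}
    (hF : ∀ G ∈ F, ∀ H ∈ F, ((G ∆ H)ᶜ).Connected) :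
    F.ncard * 2 ^ (Nat.card V - 1) ≤ 2 ^ (Nat.card V).choose 2 := by
  obtain rfl | ⟨G, hG⟩ := F.eq_empty_or_nonempty
  · simp
  obtain ⟨u⟩ := (hF G hG G hG).nonempty
  have ncard_avoid_u : (𝒫 {u}ᶜ : Set (Set V)).ncard = 2 ^ (Nat.card V - 1) := by
    rw [Set.ncard_powerset _, Set.ncard_compl, Set.ncard_singleton]
  rw [← ncard_avoid_u, ← Set.ncard_prod, ← natCard_simpleGraph, ← Set.ncard_univ]
  exact Set.ncard_le_ncard_of_injOn _ (fun _ _ ↦ Set.mem_univ _)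
    (injOn_symmDiff_cutGraph (fun G hG H hH ↦ (hF G hG H hH).preconnected) u)

end Cut

section GraphShearer

variable {V : Type*}

lemma edgeSet_spanningCoe_induce (G : SimpleGraph V) (s : Set V) :
    (G.induce s).spanningCoe.edgeSet = G.edgeSet ∩ s.sym2 := by
  ext ⟨a, b⟩
  simp

open Classical in
lemma familyTrace_image_edgeFinset [Fintype V] (F : Finset (SimpleGraph V)) (s : Set V) :
    familyTrace (F.image fun G ↦ G.edgeFinset) s.sym2.toFinset =
      (F.image fun G ↦ G.induce s).image fun K ↦ K.spanningCoe.edgeFinset := by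
  rw [familyTrace, image_image, image_image]
  refine image_congr fun G _ ↦ coe_injective ?_
  simp only [Function.comp_apply, coe_inter, SimpleGraph.coe_edgeFinset, Set.coe_toFinset,
    edgeSet_spanningCoe_induce]

variable {ι : Type*} [Fintype ι] [Finite V]

theorem ncard_pow_le_prod_ncard_image_induce (F : Set (SimpleGraph V)) (s : ι → Set V) {k : ℕ}
    (hk : k ≠ 0) (hs : ∀ a b, a ≠ b → k ≤ {i | a ∈ s i ∧ b ∈ s i}.ncard) :
    F.ncard ^ k ≤ ∏ i, ((fun G : SimpleGraph V ↦ G.induce (s i)) '' F).ncard := by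
  classical
  have := Fintype.ofFinite V
  lift F to Finset (SimpleGraph V) using F.toFinite
  set 𝒜 := F.image fun G ↦ G.edgeFinset
  have card_𝒜 : #𝒜 = #F := card_image_of_injective _ fun G H hGH ↦ by simpa using hGH
  have edge_covered : ∀ A ∈ 𝒜, ∀ e ∈ A, k ≤ #{i | e ∈ (s i).sym2.toFinset} := by
    simp only [𝒜, forall_mem_image]
    rintro G - ⟨a, b⟩ hab
    have hk_le := hs a b (SimpleGraph.mem_edgeFinset.1 hab).ne
    rw [Set.ncard_eq_toFinset_card', Set.toFinset_ofPred] at hk_le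
    simpa using hk_le
  calc (F : Set (SimpleGraph V)).ncard ^ k
    _ = #𝒜 ^ k := by rw [Set.ncard_coe_finset, card_𝒜]
    _ ≤ ∏ i, #(familyTrace 𝒜 (s i).sym2.toFinset) :=
      card_pow_le_prod_card_familyTrace 𝒜 hk edge_covered
    _ ≤ ∏ i, ((fun G : SimpleGraph V ↦ G.induce (s i)) '' F).ncard := by
      gcongr with i
      rw [familyTrace_image_edgeFinset, ← coe_image, Set.ncard_coe_finset]
      exact card_image_le

end GraphShearer

lemma mul_choose_two_pred (n : ℕ) : n * (n - 1).choose 2 = n.choose 2 * (n - 2) := by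
  rw [← Nat.choose_succ_right_eq]
  cases n with
  | zero => rfl
  | succ m => exact Nat.add_one_mul_choose_eq m 2

lemma le_choose_two {n : ℕ} (hn : 3 ≤ n) : n ≤ n.choose 2 := by
  rw [Nat.choose_two_right, Nat.le_div_iff_mul_le two_pos]
  exact Nat.mul_le_mul_left _ (by lia)

section VertexDeletion

variable {V : Type*}

lemma connected_induce_compl_singleton_of_isHamiltonian [Fintype V] [DecidableEq V] [Nontrivial V]
    {G : SimpleGraph V} (hG : G.IsHamiltonian) (v : V) : (G.induce {v}ᶜ).Connected := by
  obtain ⟨p, hp⟩ := hG.exists_isHamiltonianCycle v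
  have hsnd : p.snd ≠ v := (p.adj_snd hp.not_nil).ne'
  refine (SimpleGraph.connected_iff_exists_forall_reachable _).2 ⟨⟨p.snd, hsnd⟩, fun ⟨t, ht⟩ ↦ ?_⟩
  have hpath := hp.isHamiltonian_tail
  have hv := SimpleGraph.Walk.endpoint_notMem_support_takeUntil hpath.isPath
    (hpath.mem_support t) (Ne.symm ht)
  refine ⟨(p.tail.takeUntil t (hpath.mem_support t)).induce _ fun x hx ↦ ?_⟩
  rintro rfl
  exact hv hx

lemma induce_compl_symmDiff (G H : SimpleGraph V) (s : Set V) :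
    (G ∆ H)ᶜ.induce s = (G.induce s ∆ H.induce s)ᶜ := by
  ext a b
  simp [symmDiff_def, SimpleGraph.compl_adj, Subtype.ext_iff]

lemma ncard_pow_le_prod_ncard_image_induce_compl_singleton [Fintype V] (F : Set (SimpleGraph V))
    (hV : 3 ≤ Nat.card V) :
    F.ncard ^ (Nat.card V - 2) ≤
      ∏ v, ((fun G : SimpleGraph V ↦ G.induce {v}ᶜ) '' F).ncard := by
  refine ncard_pow_le_prod_ncard_image_induce F (fun v ↦ {v}ᶜ) (by lia) fun a b hab ↦ ?_
  have setOf_eq : {v | a ∈ ({v}ᶜ : Set V) ∧ b ∈ ({v}ᶜ : Set V)} = {a, b}ᶜ := by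
    ext v
    simp [eq_comm]
  rw [setOf_eq, Set.ncard_compl, Set.ncard_pair hab]

lemma ncard_image_induce_compl_singleton_mul_two_pow_le [Finite V] {F : Set (SimpleGraph V)} {v : V}
    (hF : ∀ G ∈ F, ∀ H ∈ F, ((G ∆ H)ᶜ.induce {v}ᶜ).Connected) :
    ((fun G : SimpleGraph V ↦ G.induce {v}ᶜ) '' F).ncard * 2 ^ (Nat.card V - 2) ≤
      2 ^ (Nat.card V - 1).choose 2 := by
  have card_compl : Nat.card ({v}ᶜ : Set V) = Nat.card V - 1 := by
    rw [Nat.card_coe_set_eq, Set.ncard_compl, Set.ncard_singleton]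
  rw [← Nat.sub_sub _ 1 1, ← card_compl]
  refine ncard_mul_two_pow_le_of_connected_compl_symmDiff ?_
  rintro _ ⟨G, hG, rfl⟩ _ ⟨H, hH, rfl⟩
  exact induce_compl_symmDiff G H _ ▸ hF G hG H hH

end VertexDeletion

theorem stmt_15_general {V : Type*} [Finite V] (hV : 3 ≤ Nat.card V) (F : Set (SimpleGraph V))
    (hF : ∀ G ∈ F, ∀ H ∈ F, ∀ v, ((G ∆ H)ᶜ.induce {v}ᶜ).Connected) :
    F.ncard ≤ 2 ^ ((Nat.card V).choose 2 - Nat.card V) := by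
  have := Fintype.ofFinite V
  set n := Nat.card V
  have prod_const_eq (x : ℕ) : ∏ _v : V, x = x ^ n := by
    rw [prod_const, card_univ, ← Nat.card_eq_fintype_card]
  have pow_le : (F.ncard * 2 ^ n) ^ (n - 2) ≤ (2 ^ n.choose 2) ^ (n - 2) :=
    calc (F.ncard * 2 ^ n) ^ (n - 2)
      _ = F.ncard ^ (n - 2) * ∏ _v : V, 2 ^ (n - 2) := by
        rw [mul_pow, prod_const_eq, pow_right_comm]
      _ ≤ ∏ v, ((fun G : SimpleGraph V ↦ G.induce {v}ᶜ) '' F).ncard * 2 ^ (n - 2) := by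
        grw [ncard_pow_le_prod_ncard_image_induce_compl_singleton F hV, prod_mul_distrib]
      _ ≤ ∏ _v : V, 2 ^ (n - 1).choose 2 := prod_le_prod' fun v _ ↦
        ncard_image_induce_compl_singleton_mul_two_pow_le fun G hG H hH ↦ hF G hG H hH v
      _ = (2 ^ n.choose 2) ^ (n - 2) := by
        rw [prod_const_eq, ← pow_mul, ← pow_mul, mul_comm _ n, mul_choose_two_pred]
  rw [← Nat.pow_div (le_choose_two hV) two_pos, Nat.le_div_iff_mul_le (by positivity)]
  exact (Nat.pow_le_pow_iff_left (by lia)).1 pow_le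

/-- A Hamiltonian-intersecting family of graphs on `[n]`, `n ≥ 3`, has size at most
`2 ^ (C(n,2) - n)`. -/
theorem stmt_15 (n : ℕ) (hn : 3 ≤ n) (F : Set (SimpleGraph (Fin n)))
    (h : ∀ G ∈ F, ∀ H ∈ F, (G ⊓ H).IsHamiltonian) :
    F.ncard ≤ 2 ^ (n.choose 2 - n) := by
  have : Nontrivial (Fin n) := Fin.nontrivial_iff_two_le.2 (by lia)
  have inf_le (G H : SimpleGraph (Fin n)) : G ⊓ H ≤ (G ∆ H)ᶜ :=
    (disjoint_symmDiff_inf G H).le_compl_left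
  simpa using stmt_15_general (by simpa) F fun G hG H hH v ↦
    connected_induce_compl_singleton_of_isHamiltonian ((h G hG H hH).mono (inf_le G H)) v
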